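/- arXiv:1903.02952 — 3 statements merged into one kernel-verified Lean document; each statement's English description precedes it below -/
import Mathlib

section
/- Let R be a Leibniz conformal algebra, Q a ℂ[∂]-module, and Ω(R,Q) = (↼_λ, ⇀_λ, ◁_λ, ▷_λ, f_λ, {·_λ·}) a Leibniz conformal extending structure of R by Q (i.e. the unified product R♮Q is a Leibniz conformal algebra). Then (Q, ⇀_λ, ◁_λ) is a module over R. -/
noncomputable section

/-- `g : ℂ → R` is (the evaluation of) a polynomial in `λ` with coefficients in `R`,
i.e. an element of `R[λ]`. -/
def IsPolyFun {R : Type*} [AddCommGroup R] [Module ℂ R] (g : ℂ → R) : Prop :=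
  ∃ (N : ℕ) (c : ℕ → R), ∀ l : ℂ, g l = ∑ i ∈ Finset.range N, l ^ i • c i

/-- A conformal bilinear map `U × V → W[λ]`, in evaluated form: `f_λ(∂u, v) = -λ f_λ(u,v)`
and `f_λ(u, ∂v) = (∂ + λ) f_λ(u,v)`. -/
structure IsConformalBilin {U V W : Type*}
    [AddCommGroup U] [Module ℂ U] [AddCommGroup V] [Module ℂ V]
    [AddCommGroup W] [Module ℂ W]
    (DU : Module.End ℂ U) (DV : Module.End ℂ V) (DW : Module.End ℂ W)
    (f : ℂ → U → V → W) : Prop where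
  add_left : ∀ (l : ℂ) (a a' : U) (b : V), f l (a + a') b = f l a b + f l a' b
  smul_left : ∀ (l c : ℂ) (a : U) (b : V), f l (c • a) b = c • f l a b
  add_right : ∀ (l : ℂ) (a : U) (b b' : V), f l a (b + b') = f l a b + f l a b'
  smul_right : ∀ (l c : ℂ) (a : U) (b : V), f l a (c • b) = c • f l a b
  poly : ∀ (a : U) (b : V), IsPolyFun (fun l => f l a b)
  conf_left : ∀ (l : ℂ) (a : U) (b : V), f l (DU a) b = (-l) • f l a b
  conf_right : ∀ (l : ℂ) (a : U) (b : V), f l a (DV b) = DW (f l a b) + l • f l a b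

/-- A Leibniz conformal algebra structure on the `ℂ[∂]`-module `(R, D)`:
a conformal bilinear `λ`-bracket satisfying the Jacobi identity. -/
structure IsLeibnizConformal {R : Type*} [AddCommGroup R] [Module ℂ R]
    (D : Module.End ℂ R) (br : ℂ → R → R → R) : Prop where
  bilin : IsConformalBilin D D D br
  jacobi : ∀ (l m : ℂ) (a b c : R),
    br l a (br m b c) = br (l + m) (br l a b) c + br m b (br l a c)

/-- An extending datum `Ω(R,Q) = (↼, ⇀, ◁, ▷, f, {·_λ·})` of a Leibniz conformal algebra
`R` by a `ℂ[∂]`-module `Q`: six conformal bilinear maps.  Here `lh = ↼`, `rh = ⇀`,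
`lt = ◁`, `rt = ▷`, `fm = f`, `bq = {·_λ·}`. -/
structure IsExtendingDatum {R Q : Type*}
    [AddCommGroup R] [Module ℂ R] [AddCommGroup Q] [Module ℂ Q]
    (DR : Module.End ℂ R) (DQ : Module.End ℂ Q)
    (lh : ℂ → R → Q → R) (rh : ℂ → R → Q → Q)
    (lt : ℂ → Q → R → Q) (rt : ℂ → Q → R → R)
    (fm : ℂ → Q → Q → R) (bq : ℂ → Q → Q → Q) : Prop where
  lh_bilin : IsConformalBilin DR DQ DR lh
  rh_bilin : IsConformalBilin DR DQ DQ rh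
  lt_bilin : IsConformalBilin DQ DR DQ lt
  rt_bilin : IsConformalBilin DQ DR DR rt
  fm_bilin : IsConformalBilin DQ DQ DR fm
  bq_bilin : IsConformalBilin DQ DQ DQ bq

/-- The unified product bracket on `R × Q`:
`[(a,x)_λ (b,y)] = ([a_λ b] + a↼_λ y + x▷_λ b + f_λ(x,y), a⇀_λ y + x◁_λ b + {x_λ y})`. -/
def unifiedBracket {R Q : Type*}
    [AddCommGroup R] [Module ℂ R] [AddCommGroup Q] [Module ℂ Q]
    (br : ℂ → R → R → R)
    (lh : ℂ → R → Q → R) (rh : ℂ → R → Q → Q)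
    (lt : ℂ → Q → R → Q) (rt : ℂ → Q → R → R)
    (fm : ℂ → Q → Q → R) (bq : ℂ → Q → Q → Q) :
    ℂ → R × Q → R × Q → R × Q :=
  fun l p q =>
    (br l p.1 q.1 + lh l p.1 q.2 + rt l p.2 q.1 + fm l p.2 q.2,
     rh l p.1 q.2 + lt l p.2 q.1 + bq l p.2 q.2)

/-- A module `(M, lact, ract)` over a Leibniz conformal algebra `(L, DL, brL)`:
two conformal bilinear actions satisfying the three module axioms. -/
structure IsLCModule {L M : Type*}
    [AddCommGroup L] [Module ℂ L] [AddCommGroup M] [Module ℂ M]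
    (DL : Module.End ℂ L) (DM : Module.End ℂ M)
    (brL : ℂ → L → L → L) (lact : ℂ → L → M → M) (ract : ℂ → M → L → M) : Prop where
  lact_bilin : IsConformalBilin DL DM DM lact
  ract_bilin : IsConformalBilin DM DL DM ract
  ax1 : ∀ (l m : ℂ) (a b : L) (x : M),
    lact l a (lact m b x) = lact (l + m) (brL l a b) x + lact m b (lact l a x)
  ax2 : ∀ (l m : ℂ) (a b : L) (x : M),
    lact l a (ract m x b) = ract (l + m) (lact l a x) b + ract m x (brL l a b)
  ax3 : ∀ (l m : ℂ) (a b : L) (x : M),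
    ract l x (brL m a b) = ract (l + m) (ract l x a) b + lact m a (ract l x b)

/-! The unified product contains `R` as the subalgebra `R × 0`, and the second projection identifies
`Q` with the quotient by it. Left and right brackets with a subalgebra preserve that subalgebra, so
they descend to the quotient; there they are `⇀` and `◁`, and the three module axioms are the images
of the Jacobi identity with two of its arguments in `R` and one in `Q`. -/

namespace IsConformalBilin

variable {U V W : Type*} [AddCommGroup U] [Module ℂ U] [AddCommGroup V] [Module ℂ V]
  [AddCommGroup W] [Module ℂ W] {DU : Module.End ℂ U} {DV : Module.End ℂ V}
  {DW : Module.End ℂ W} {f : ℂ → U → V → W}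

theorem zero_left (hf : IsConformalBilin DU DV DW f) (l : ℂ) (v : V) : f l 0 v = 0 := by
  simpa using hf.smul_left l 0 0 v

theorem zero_right (hf : IsConformalBilin DU DV DW f) (l : ℂ) (u : U) : f l u 0 = 0 := by
  simpa using hf.smul_right l 0 u 0

end IsConformalBilin

theorem IsLeibnizConformal.isLCModule_of_surjective {E L M : Type*}
    [AddCommGroup E] [Module ℂ E] [AddCommGroup L] [Module ℂ L] [AddCommGroup M] [Module ℂ M]
    {DE : Module.End ℂ E} {DL : Module.End ℂ L} {DM : Module.End ℂ M}
    {brE : ℂ → E → E → E} {brL : ℂ → L → L → L} {lact : ℂ → L → M → M} {ract : ℂ → M → L → M}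
    (hE : IsLeibnizConformal DE brE)
    (hlact : IsConformalBilin DL DM DM lact) (hract : IsConformalBilin DM DL DM ract)
    (ι : L → E) (π : E →+ M) (hπ : Function.Surjective π)
    (map_bracket : ∀ l a b, brE l (ι a) (ι b) = ι (brL l a b))
    (map_lact : ∀ l a p, π (brE l (ι a) p) = lact l a (π p))
    (map_ract : ∀ l p b, π (brE l p (ι b)) = ract l (π p) b) :
    IsLCModule DL DM brL lact ract where
  lact_bilin := hlact
  ract_bilin := hract
  ax1 l m a b x := by
    obtain ⟨p, rfl⟩ := hπ x
    simpa only [map_add, map_bracket, map_lact] using congrArg π (hE.jacobi l m (ι a) (ι b) p)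
  ax2 l m a b x := by
    obtain ⟨p, rfl⟩ := hπ x
    simpa only [map_add, map_bracket, map_lact, map_ract] using
      congrArg π (hE.jacobi l m (ι a) p (ι b))
  ax3 l m a b x := by
    obtain ⟨p, rfl⟩ := hπ x
    simpa only [map_add, map_bracket, map_lact, map_ract] using
      congrArg π (hE.jacobi l m p (ι a) (ι b))

namespace IsExtendingDatum

variable {R Q : Type*} [AddCommGroup R] [Module ℂ R] [AddCommGroup Q] [Module ℂ Q]
  {DR : Module.End ℂ R} {DQ : Module.End ℂ Q} {lh : ℂ → R → Q → R} {rh : ℂ → R → Q → Q}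
  {lt : ℂ → Q → R → Q} {rt : ℂ → Q → R → R} {fm : ℂ → Q → Q → R} {bq : ℂ → Q → Q → Q}

theorem snd_unifiedBracket_inl_left (hΩ : IsExtendingDatum DR DQ lh rh lt rt fm bq)
    (br : ℂ → R → R → R) (l : ℂ) (a : R) (p : R × Q) :
    (unifiedBracket br lh rh lt rt fm bq l (a, 0) p).2 = rh l a p.2 := by
  simp only [unifiedBracket, hΩ.lt_bilin.zero_left, hΩ.bq_bilin.zero_left, add_zero]

theorem snd_unifiedBracket_inl_right (hΩ : IsExtendingDatum DR DQ lh rh lt rt fm bq)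
    (br : ℂ → R → R → R) (l : ℂ) (p : R × Q) (b : R) :
    (unifiedBracket br lh rh lt rt fm bq l p (b, 0)).2 = lt l p.2 b := by
  simp only [unifiedBracket, hΩ.rh_bilin.zero_right, hΩ.bq_bilin.zero_right, zero_add, add_zero]

theorem unifiedBracket_inl_inl (hΩ : IsExtendingDatum DR DQ lh rh lt rt fm bq)
    (br : ℂ → R → R → R) (l : ℂ) (a b : R) :
    unifiedBracket br lh rh lt rt fm bq l (a, 0) (b, 0) = (br l a b, 0) := by
  ext
  · simp only [unifiedBracket, hΩ.lh_bilin.zero_right, hΩ.rt_bilin.zero_left,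
      hΩ.fm_bilin.zero_left, add_zero]
  · rw [hΩ.snd_unifiedBracket_inl_left, hΩ.rh_bilin.zero_right]

end IsExtendingDatum

/-- If `Ω(R,Q)` is a Leibniz conformal extending structure of `R` by `Q`
(i.e. the unified product `R ♮ Q` is a Leibniz conformal algebra), then `(Q, ⇀, ◁)` is
a module over `R`. -/
theorem isLCModule_of_extending_structure
    {R Q : Type*} [AddCommGroup R] [Module ℂ R] [AddCommGroup Q] [Module ℂ Q]
    (DR : Module.End ℂ R) (DQ : Module.End ℂ Q)
    (br : ℂ → R → R → R) (hLeib : IsLeibnizConformal DR br)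
    (lh : ℂ → R → Q → R) (rh : ℂ → R → Q → Q)
    (lt : ℂ → Q → R → Q) (rt : ℂ → Q → R → R)
    (fm : ℂ → Q → Q → R) (bq : ℂ → Q → Q → Q)
    (hdatum : IsExtendingDatum DR DQ lh rh lt rt fm bq)
    (hunified : IsLeibnizConformal (LinearMap.prodMap DR DQ)
      (unifiedBracket br lh rh lt rt fm bq)) :
    IsLCModule DR DQ br rh lt :=
  hunified.isLCModule_of_surjective hdatum.rh_bilin hdatum.lt_bilin
    (fun a => (a, 0)) (AddMonoidHom.snd R Q) Prod.snd_surjective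
    (hdatum.unifiedBracket_inl_inl br)
    (hdatum.snd_unifiedBracket_inl_left br)
    (hdatum.snd_unifiedBracket_inl_right br)
end
end

section
/- Let R be a Leibniz conformal algebra, Q a ℂ[∂]-module, and set E = R ⊕ Q (direct sum of ℂ[∂]-modules). Suppose E carries a Leibniz conformal algebra structure [·_λ·] such that R is a subalgebra of E. Then there exists a Leibniz conformal extending structure Ω(R,Q) = (↼_λ, ⇀_λ, ◁_λ, ▷_λ, f_λ, {·_λ·}) of R by Q and an isomorphism of Leibniz conformal algebras E ≅ R♮Q which stabilizes R and co-stabilizes Q. Explicitly, letting p: E → R be the natural projection, the extending structure is given by a↼_λ x = p([a_λ x]), a⇀_λ x = [a_λ x] − p([a_λ x]), x▷_λ a = p([x_λ a]), x◁_λ a = [x_λ a] − p([x_λ a]), f_λ(x,y) = p([x_λ y]), {x_λ y} = [x_λ y] − p([x_λ y]) for a ∈ R, x,y ∈ Q. -/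
noncomputable section

/-!
Composing a conformal bilinear map with `ℂ[∂]`-linear maps, in its arguments and on its values,
gives a conformal bilinear map. Hence the bracket of `E = R ⊕ Q`, restricted along the inclusions of
`R` and `Q` and followed by the projections, yields an extending datum. Biadditivity recovers the
bracket of `E` from its four restrictions, and the one to `R × R` is the bracket of `R` because `R`
is a subalgebra. So the unified bracket is the bracket of `E`: the isomorphism `E ≅ R ♮ Q` is the
identity, and the Jacobi identity is inherited.
-/

section Compression

open Function

variable {U V W U' V' W' : Type*}
  [AddCommGroup U] [Module ℂ U] [AddCommGroup V] [Module ℂ V] [AddCommGroup W] [Module ℂ W]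
  [AddCommGroup U'] [Module ℂ U'] [AddCommGroup V'] [Module ℂ V'] [AddCommGroup W'] [Module ℂ W']

theorem IsPolyFun.map {g : ℂ → W} (hg : IsPolyFun g) (p : W →ₗ[ℂ] W') :
    IsPolyFun fun l => p (g l) := by
  obtain ⟨N, c, hc⟩ := hg
  exact ⟨N, fun i => p (c i), fun l => by simp only [hc, map_sum, map_smul]⟩

/-- The compression `(u, v) ↦ p (f_λ(i u, j v))` of a family of maps `f_λ` along linear maps `i`,
`j` into its arguments and `p` out of its values. For `i`, `j` inclusions and `p` a projection of
`R × Q`, it extracts from a bracket on `R × Q` the six maps of an extending datum. -/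
def compression (i : U' →ₗ[ℂ] U) (j : V' →ₗ[ℂ] V) (p : W →ₗ[ℂ] W') (f : ℂ → U → V → W) :
    ℂ → U' → V' → W' :=
  fun l u v => p (f l (i u) (j v))

protected theorem IsConformalBilin.compression
    {DU : Module.End ℂ U} {DV : Module.End ℂ V} {DW : Module.End ℂ W}
    {DU' : Module.End ℂ U'} {DV' : Module.End ℂ V'} {DW' : Module.End ℂ W'}
    {f : ℂ → U → V → W} (hf : IsConformalBilin DU DV DW f)
    {i : U' →ₗ[ℂ] U} {j : V' →ₗ[ℂ] V} {p : W →ₗ[ℂ] W'}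
    (hi : Semiconj i DU' DU) (hj : Semiconj j DV' DV) (hp : Semiconj p DW DW') :
    IsConformalBilin DU' DV' DW' (compression i j p f) where
  add_left l a a' b := by simp only [compression, map_add, hf.add_left]
  smul_left l c a b := by simp only [compression, map_smul, hf.smul_left]
  add_right l a b b' := by simp only [compression, map_add, hf.add_right]
  smul_right l c a b := by simp only [compression, map_smul, hf.smul_right]
  poly a b := (hf.poly (i a) (j b)).map p
  conf_left l a b := by simp only [compression, hi.eq, hf.conf_left, map_smul]
  conf_right l a b := by simp only [compression, hj.eq, hf.conf_right, map_add, map_smul, hp.eq]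

theorem IsConformalBilin.apply_mk_mk
    {DU : Module.End ℂ (U × U')} {DV : Module.End ℂ (V × V')} {DW : Module.End ℂ W}
    {f : ℂ → U × U' → V × V' → W} (hf : IsConformalBilin DU DV DW f)
    (l : ℂ) (a : U) (x : U') (b : V) (y : V') :
    f l (a, x) (b, y) =
      f l (a, 0) (b, 0) + f l (a, 0) (0, y) + f l (0, x) (b, 0) + f l (0, x) (0, y) := by
  calc f l (a, x) (b, y)
    _ = f l ((a, 0) + (0, x)) ((b, 0) + (0, y)) := by
      simp only [Prod.mk_add_mk, add_zero, zero_add]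
    _ = _ := by simp only [hf.add_left, hf.add_right, add_assoc]

end Compression

section Semiconj

open Function LinearMap

variable {S M N : Type*} [Semiring S] [AddCommMonoid M] [Module S M] [AddCommMonoid N] [Module S N]
  (DM : Module.End S M) (DN : Module.End S N)

theorem semiconj_inl_prodMap : Semiconj (inl S M N) DM (prodMap DM DN) := fun _ => by simp

theorem semiconj_inr_prodMap : Semiconj (inr S M N) DN (prodMap DM DN) := fun _ => by simp

theorem semiconj_fst_prodMap : Semiconj (fst S M N) (prodMap DM DN) DM := fun _ => rfl

theorem semiconj_snd_prodMap : Semiconj (snd S M N) (prodMap DM DN) DN := fun _ => rfl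

end Semiconj

section UnifiedProduct

open LinearMap

variable {R Q : Type*} [AddCommGroup R] [Module ℂ R] [AddCommGroup Q] [Module ℂ Q]
  {f : ℂ → R × Q → R × Q → R × Q}

theorem IsConformalBilin.isExtendingDatum_compression
    {DR : Module.End ℂ R} {DQ : Module.End ℂ Q}
    (hf : IsConformalBilin (prodMap DR DQ) (prodMap DR DQ) (prodMap DR DQ) f) :
    IsExtendingDatum DR DQ
      (compression (inl ℂ R Q) (inr ℂ R Q) (fst ℂ R Q) f)
      (compression (inl ℂ R Q) (inr ℂ R Q) (snd ℂ R Q) f)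
      (compression (inr ℂ R Q) (inl ℂ R Q) (snd ℂ R Q) f)
      (compression (inr ℂ R Q) (inl ℂ R Q) (fst ℂ R Q) f)
      (compression (inr ℂ R Q) (inr ℂ R Q) (fst ℂ R Q) f)
      (compression (inr ℂ R Q) (inr ℂ R Q) (snd ℂ R Q) f) :=
  have hinl := semiconj_inl_prodMap DR DQ
  have hinr := semiconj_inr_prodMap DR DQ
  have hfst := semiconj_fst_prodMap DR DQ
  have hsnd := semiconj_snd_prodMap DR DQ
  { lh_bilin := hf.compression hinl hinr hfst
    rh_bilin := hf.compression hinl hinr hsnd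
    lt_bilin := hf.compression hinr hinl hsnd
    rt_bilin := hf.compression hinr hinl hfst
    fm_bilin := hf.compression hinr hinr hfst
    bq_bilin := hf.compression hinr hinr hsnd }

theorem IsConformalBilin.unifiedBracket_compression {D D' D'' : Module.End ℂ (R × Q)}
    (hf : IsConformalBilin D D' D'' f) {br : ℂ → R → R → R}
    (hsub : ∀ (l : ℂ) (a b : R), f l (a, 0) (b, 0) = (br l a b, 0)) :
    unifiedBracket br
      (compression (inl ℂ R Q) (inr ℂ R Q) (fst ℂ R Q) f)
      (compression (inl ℂ R Q) (inr ℂ R Q) (snd ℂ R Q) f)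
      (compression (inr ℂ R Q) (inl ℂ R Q) (snd ℂ R Q) f)
      (compression (inr ℂ R Q) (inl ℂ R Q) (fst ℂ R Q) f)
      (compression (inr ℂ R Q) (inr ℂ R Q) (fst ℂ R Q) f)
      (compression (inr ℂ R Q) (inr ℂ R Q) (snd ℂ R Q) f) = f := by
  funext l ⟨a, x⟩ ⟨b, y⟩
  rw [hf.apply_mk_mk l a x b y, hsub]
  ext <;> simp [unifiedBracket, compression]

end UnifiedProduct

/-- If `E = R ⊕ Q` carries a Leibniz conformal algebra structure such that
`R` is a subalgebra, then there is a Leibniz conformal extending structure `Ω(R,Q)` of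
`R` by `Q`, given by the explicit formulas via the projection `p = Prod.fst : E → R`,
such that `E` is isomorphic to `R ♮ Q` (here the unified bracket literally coincides with
the given one, so the identity is an isomorphism stabilizing `R` and co-stabilizing `Q`). -/
theorem extending_structure_of_subalgebra
    {R Q : Type*} [AddCommGroup R] [Module ℂ R] [AddCommGroup Q] [Module ℂ Q]
    (DR : Module.End ℂ R) (DQ : Module.End ℂ Q)
    (br : ℂ → R → R → R) (hLeib : IsLeibnizConformal DR br)
    (brE : ℂ → R × Q → R × Q → R × Q)
    (hE : IsLeibnizConformal (LinearMap.prodMap DR DQ) brE)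
    (hsub : ∀ (l : ℂ) (a b : R), brE l (a, 0) (b, 0) = (br l a b, 0)) :
    ∃ (lh : ℂ → R → Q → R) (rh : ℂ → R → Q → Q) (lt : ℂ → Q → R → Q)
      (rt : ℂ → Q → R → R) (fm : ℂ → Q → Q → R) (bq : ℂ → Q → Q → Q),
      IsExtendingDatum DR DQ lh rh lt rt fm bq ∧
      IsLeibnizConformal (LinearMap.prodMap DR DQ)
        (unifiedBracket br lh rh lt rt fm bq) ∧
      (∀ (l : ℂ) (u v : R × Q), unifiedBracket br lh rh lt rt fm bq l u v = brE l u v) ∧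
      (∀ (l : ℂ) (a : R) (x : Q), lh l a x = (brE l (a, 0) (0, x)).1) ∧
      (∀ (l : ℂ) (a : R) (x : Q), rh l a x = (brE l (a, 0) (0, x)).2) ∧
      (∀ (l : ℂ) (x : Q) (a : R), rt l x a = (brE l (0, x) (a, 0)).1) ∧
      (∀ (l : ℂ) (x : Q) (a : R), lt l x a = (brE l (0, x) (a, 0)).2) ∧
      (∀ (l : ℂ) (x y : Q), fm l x y = (brE l (0, x) (0, y)).1) ∧
      (∀ (l : ℂ) (x y : Q), bq l x y = (brE l (0, x) (0, y)).2) := by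
  have hbracket := hE.bilin.unifiedBracket_compression hsub
  refine ⟨_, _, _, _, _, _, hE.bilin.isExtendingDatum_compression, ?_, fun l u v => ?_,
    fun _ _ _ => rfl, fun _ _ _ => rfl, fun _ _ _ => rfl,
    fun _ _ _ => rfl, fun _ _ _ => rfl, fun _ _ _ => rfl⟩
  · rwa [hbracket]
  · rw [hbracket]
end
end

section
/- Let R be a Leibniz conformal algebra, Q a ℂ[∂]-module, and let Ω(R,Q) = (↼_λ, ⇀_λ, ◁_λ, ▷_λ, f_λ, {·_λ·}) and Ω'(R,Q) = (↼'_λ, ⇀'_λ, ◁'_λ, ▷'_λ, f'_λ, {·_λ·}') be two Leibniz conformal extending structures of R by Q, with unified products R♮Q and R♮'Q. Then there is a Leibniz conformal algebra isomorphism R♮Q → R♮'Q stabilizing R if and only if Ω(R,Q) ≡ Ω'(R,Q), and there is a Leibniz conformal algebra isomorphism R♮Q → R♮'Q stabilizing R and co-stabilizing Q if and only if Ω(R,Q) ≈ Ω'(R,Q). -/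
noncomputable section

/-- `φ` commutes with the `ℂ[∂]`-module structure, i.e. is a `ℂ[∂]`-module map. -/
def PreservesD {E : Type*} [AddCommGroup E] [Module ℂ E]
    (D : Module.End ℂ E) (φ : E →ₗ[ℂ] E) : Prop :=
  ∀ u : E, φ (D u) = D (φ u)

/-- `φ` intertwines the two `λ`-brackets. -/
def IsBracketHom {E : Type*} [AddCommGroup E] [Module ℂ E]
    (br br' : ℂ → E → E → E) (φ : E →ₗ[ℂ] E) : Prop :=
  ∀ (l : ℂ) (u v : E), φ (br l u v) = br' l (φ u) (φ v)

/-- `φ : R ⊕ Q → R ⊕ Q` stabilizes `R`. -/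
def StabilizesFst {R Q : Type*} [AddCommGroup R] [Module ℂ R] [AddCommGroup Q] [Module ℂ Q]
    (φ : R × Q →ₗ[ℂ] R × Q) : Prop :=
  ∀ a : R, φ (a, 0) = (a, 0)

/-- `φ : R ⊕ Q → R ⊕ Q` co-stabilizes `Q`. -/
def CoStabilizesSnd {R Q : Type*} [AddCommGroup R] [Module ℂ R] [AddCommGroup Q] [Module ℂ Q]
    (φ : R × Q →ₗ[ℂ] R × Q) : Prop :=
  ∀ p : R × Q, (φ p).2 = p.2

/-- The extending datum `(lh, rh, lt, rt, fm, bq)` is obtained from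
`(lh', rh', lt', rt', fm', bq')` via the pair `(u, v)` (Definition 3.5 of the paper). -/
def DatumEquivVia {R Q : Type*}
    [AddCommGroup R] [Module ℂ R] [AddCommGroup Q] [Module ℂ Q]
    (DR : Module.End ℂ R) (DQ : Module.End ℂ Q) (br : ℂ → R → R → R)
    (lh : ℂ → R → Q → R) (rh : ℂ → R → Q → Q)
    (lt : ℂ → Q → R → Q) (rt : ℂ → Q → R → R)
    (fm : ℂ → Q → Q → R) (bq : ℂ → Q → Q → Q)
    (lh' : ℂ → R → Q → R) (rh' : ℂ → R → Q → Q)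
    (lt' : ℂ → Q → R → Q) (rt' : ℂ → Q → R → R)
    (fm' : ℂ → Q → Q → R) (bq' : ℂ → Q → Q → Q)
    (u : Q →ₗ[ℂ] R) (v : Q ≃ₗ[ℂ] Q) : Prop :=
  (∀ q : Q, u (DQ q) = DR (u q)) ∧
  (∀ q : Q, v (DQ q) = DQ (v q)) ∧
  (∀ (l : ℂ) (a : R) (x : Q), rh l a x = v.symm (rh' l a (v x))) ∧
  (∀ (l : ℂ) (a : R) (x : Q),
      lh l a x = br l a (u x) + lh' l a (v x) - u (rh l a x)) ∧
  (∀ (l : ℂ) (x : Q) (a : R), lt l x a = v.symm (lt' l (v x) a)) ∧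
  (∀ (l : ℂ) (x : Q) (a : R),
      rt l x a = br l (u x) a + rt' l (v x) a - u (lt l x a)) ∧
  (∀ (l : ℂ) (x y : Q),
      bq l x y = v.symm (rh' l (u x) (v y)) + v.symm (lt' l (v x) (u y))
        + v.symm (bq' l (v x) (v y))) ∧
  (∀ (l : ℂ) (x y : Q),
      fm l x y = br l (u x) (u y) + lh' l (u x) (v y) + rt' l (v x) (u y)
        + fm' l (v x) (v y) - u (bq l x y))

/-!
A linear endomorphism of `R × Q` fixing `R` pointwise has the triangular form
`(a, x) ↦ (a + u x, v x)`, and it is bijective exactly when `v` is. Both unified brackets are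
biadditive, so such a map is a homomorphism as soon as it respects the brackets of pairs of
elements of the two summands. On `R × R` there is nothing to check; on `R × Q`, `Q × R` and
`Q × Q`, comparing the two components gives the six equations of `DatumEquivVia`.
-/

section TriangularMap

variable {k R Q Q' : Type*} [Semiring k] [AddCommMonoid Q] [Module k Q]
  [AddCommMonoid Q'] [Module k Q']

section AddCommMonoid

variable [AddCommMonoid R] [Module k R]

/-- The linear map `R × Q → R × Q'`, `(a, x) ↦ (a + u x, v x)`, with upper triangular block
matrix `!![1, u; 0, v]`: the general form of a linear map `R × Q → R × Q'` that is the identity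
on `R`. -/
def triangularMap (u : Q →ₗ[k] R) (v : Q →ₗ[k] Q') : R × Q →ₗ[k] R × Q' :=
  (LinearMap.inl k R Q').coprod (u.prod v)

theorem triangularMap_apply (u : Q →ₗ[k] R) (v : Q →ₗ[k] Q') (p : R × Q) :
    triangularMap u v p = (p.1 + u p.2, v p.2) := by
  simp [triangularMap]

theorem exists_triangularMap_eq_iff (φ : R × Q →ₗ[k] R × Q') :
    (∃ u v, triangularMap u v = φ) ↔ ∀ a, φ (a, 0) = (a, 0) := by
  constructor
  · rintro ⟨u, v, rfl⟩ a
    simp [triangularMap_apply]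
  · intro hφ
    refine ⟨LinearMap.fst k R Q' ∘ₗ φ ∘ₗ LinearMap.inr k R Q,
      LinearMap.snd k R Q' ∘ₗ φ ∘ₗ LinearMap.inr k R Q, ?_⟩
    apply LinearMap.prod_ext <;> ext <;> simp [triangularMap_apply, hφ]

end AddCommMonoid

variable [AddCommGroup R] [Module k R] {u : Q →ₗ[k] R} {v : Q →ₗ[k] Q'}

theorem triangularMap_injective_iff :
    Function.Injective (triangularMap u v) ↔ Function.Injective v := by
  constructor
  · intro h x y hxy
    have heq : triangularMap u v (-u x, x) = triangularMap u v (-u y, y) := by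
      simp [triangularMap_apply, hxy]
    exact congrArg Prod.snd (h heq)
  · rintro h ⟨a, x⟩ ⟨b, y⟩ hxy
    simp only [triangularMap_apply, Prod.mk.injEq] at hxy
    obtain rfl := h hxy.2
    rw [add_right_cancel hxy.1]

theorem triangularMap_surjective_iff :
    Function.Surjective (triangularMap u v) ↔ Function.Surjective v := by
  constructor
  · intro h y
    obtain ⟨p, hp⟩ := h (0, y)
    rw [triangularMap_apply] at hp
    exact ⟨p.2, congrArg Prod.snd hp⟩
  · rintro h ⟨b, y⟩
    obtain ⟨x, rfl⟩ := h y
    exact ⟨(b - u x, x), by simp [triangularMap_apply]⟩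

theorem triangularMap_bijective_iff :
    Function.Bijective (triangularMap u v) ↔ Function.Bijective v :=
  and_congr triangularMap_injective_iff triangularMap_surjective_iff

end TriangularMap

theorem forall_prod_eq_iff_of_biadditive {R Q M : Type*} [AddZeroClass R] [AddZeroClass Q] [Add M]
    {f g : R × Q → R × Q → M}
    (hf_left : ∀ p p' q, f (p + p') q = f p q + f p' q)
    (hf_right : ∀ p q q', f p (q + q') = f p q + f p q')
    (hg_left : ∀ p p' q, g (p + p') q = g p q + g p' q)
    (hg_right : ∀ p q q', g p (q + q') = g p q + g p q') :
    (∀ p q, f p q = g p q) ↔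
      (∀ a b, f (a, 0) (b, 0) = g (a, 0) (b, 0)) ∧ (∀ a y, f (a, 0) (0, y) = g (a, 0) (0, y)) ∧
      (∀ x b, f (0, x) (b, 0) = g (0, x) (b, 0)) ∧ (∀ x y, f (0, x) (0, y) = g (0, x) (0, y)) := by
  constructor
  · intro h
    exact ⟨fun _ _ => h _ _, fun _ _ => h _ _, fun _ _ => h _ _, fun _ _ => h _ _⟩
  · rintro ⟨hRR, hRQ, hQR, hQQ⟩ ⟨a, x⟩ ⟨b, y⟩
    have eq_inl_add_inr (r : R) (s : Q) : (r, s) = (r, 0) + (0, s) := by simp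
    simp only [eq_inl_add_inr a x, eq_inl_add_inr b y, hf_left, hf_right, hg_left, hg_right, hRR,
      hRQ, hQR, hQQ]

section ConformalBilin

variable {U V W : Type*} [AddCommGroup U] [Module ℂ U] [AddCommGroup V] [Module ℂ V]
  [AddCommGroup W] [Module ℂ W] {DU : Module.End ℂ U} {DV : Module.End ℂ V}
  {DW : Module.End ℂ W} {f : ℂ → U → V → W}

theorem IsConformalBilin.zero_left_s6 (hf : IsConformalBilin DU DV DW f) (l : ℂ) (b : V) :
    f l 0 b = 0 := by
  simpa using hf.smul_left l 0 0 b

theorem IsConformalBilin.zero_right_s6 (hf : IsConformalBilin DU DV DW f) (l : ℂ) (a : U) :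
    f l a 0 = 0 := by
  simpa using hf.smul_right l 0 a 0

end ConformalBilin

section UnifiedProduct

variable {R Q : Type*} [AddCommGroup R] [Module ℂ R] [AddCommGroup Q] [Module ℂ Q]
  {DR : Module.End ℂ R} {DQ : Module.End ℂ Q} {br : ℂ → R → R → R}
  {lh : ℂ → R → Q → R} {rh : ℂ → R → Q → Q} {lt : ℂ → Q → R → Q} {rt : ℂ → Q → R → R}
  {fm : ℂ → Q → Q → R} {bq : ℂ → Q → Q → Q}
  {lh' : ℂ → R → Q → R} {rh' : ℂ → R → Q → Q} {lt' : ℂ → Q → R → Q} {rt' : ℂ → Q → R → R}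
  {fm' : ℂ → Q → Q → R} {bq' : ℂ → Q → Q → Q}

theorem unifiedBracket_add_left (hbr : IsConformalBilin DR DR DR br)
    (hΩ : IsExtendingDatum DR DQ lh rh lt rt fm bq) (l : ℂ) (p p' q : R × Q) :
    unifiedBracket br lh rh lt rt fm bq l (p + p') q =
      unifiedBracket br lh rh lt rt fm bq l p q + unifiedBracket br lh rh lt rt fm bq l p' q := by
  simp only [unifiedBracket, Prod.fst_add, Prod.snd_add, Prod.mk_add_mk, Prod.mk.injEq,
    hbr.add_left, hΩ.lh_bilin.add_left, hΩ.rh_bilin.add_left, hΩ.lt_bilin.add_left,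
    hΩ.rt_bilin.add_left, hΩ.fm_bilin.add_left, hΩ.bq_bilin.add_left]
  constructor <;> abel

theorem unifiedBracket_add_right (hbr : IsConformalBilin DR DR DR br)
    (hΩ : IsExtendingDatum DR DQ lh rh lt rt fm bq) (l : ℂ) (p q q' : R × Q) :
    unifiedBracket br lh rh lt rt fm bq l p (q + q') =
      unifiedBracket br lh rh lt rt fm bq l p q + unifiedBracket br lh rh lt rt fm bq l p q' := by
  simp only [unifiedBracket, Prod.fst_add, Prod.snd_add, Prod.mk_add_mk, Prod.mk.injEq,
    hbr.add_right, hΩ.lh_bilin.add_right, hΩ.rh_bilin.add_right, hΩ.lt_bilin.add_right,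
    hΩ.rt_bilin.add_right, hΩ.fm_bilin.add_right, hΩ.bq_bilin.add_right]
  constructor <;> abel

theorem unifiedBracket_inl_left (hΩ : IsExtendingDatum DR DQ lh rh lt rt fm bq)
    (l : ℂ) (a : R) (q : R × Q) :
    unifiedBracket br lh rh lt rt fm bq l (a, 0) q =
      (br l a q.1 + lh l a q.2, rh l a q.2) := by
  simp [unifiedBracket, hΩ.rt_bilin.zero_left_s6, hΩ.fm_bilin.zero_left_s6, hΩ.lt_bilin.zero_left_s6,
    hΩ.bq_bilin.zero_left_s6]

theorem unifiedBracket_inl_right (hΩ : IsExtendingDatum DR DQ lh rh lt rt fm bq)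
    (l : ℂ) (p : R × Q) (b : R) :
    unifiedBracket br lh rh lt rt fm bq l p (b, 0) =
      (br l p.1 b + rt l p.2 b, lt l p.2 b) := by
  simp [unifiedBracket, hΩ.lh_bilin.zero_right_s6, hΩ.fm_bilin.zero_right_s6, hΩ.rh_bilin.zero_right_s6,
    hΩ.bq_bilin.zero_right_s6]

theorem unifiedBracket_inr_inr (hbr : IsConformalBilin DR DR DR br)
    (hΩ : IsExtendingDatum DR DQ lh rh lt rt fm bq) (l : ℂ) (x y : Q) :
    unifiedBracket br lh rh lt rt fm bq l (0, x) (0, y) = (fm l x y, bq l x y) := by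
  simp [unifiedBracket, hbr.zero_left_s6, hΩ.lh_bilin.zero_left_s6, hΩ.rt_bilin.zero_right_s6,
    hΩ.rh_bilin.zero_left_s6, hΩ.lt_bilin.zero_right_s6]

theorem preservesD_triangularMap_iff {u : Q →ₗ[ℂ] R} {v : Q →ₗ[ℂ] Q} :
    PreservesD (LinearMap.prodMap DR DQ) (triangularMap u v) ↔
      (∀ x, u (DQ x) = DR (u x)) ∧ ∀ x, v (DQ x) = DQ (v x) := by
  simp only [PreservesD, triangularMap_apply, LinearMap.prodMap_apply, map_add, Prod.forall,
    Prod.mk.injEq, add_right_inj, forall_const, forall_and]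

theorem isBracketHom_triangularMap_iff (hbr : IsConformalBilin DR DR DR br)
    (hΩ : IsExtendingDatum DR DQ lh rh lt rt fm bq)
    (hΩ' : IsExtendingDatum DR DQ lh' rh' lt' rt' fm' bq') {u : Q →ₗ[ℂ] R} {v : Q →ₗ[ℂ] Q} :
    IsBracketHom (unifiedBracket br lh rh lt rt fm bq) (unifiedBracket br lh' rh' lt' rt' fm' bq')
        (triangularMap u v) ↔
      ∀ l,
        (∀ a x, lh l a x + u (rh l a x) = br l a (u x) + lh' l a (v x) ∧
          v (rh l a x) = rh' l a (v x)) ∧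
        (∀ x a, rt l x a + u (lt l x a) = br l (u x) a + rt' l (v x) a ∧
          v (lt l x a) = lt' l (v x) a) ∧
        (∀ x y, fm l x y + u (bq l x y) =
            br l (u x) (u y) + lh' l (u x) (v y) + rt' l (v x) (u y) + fm' l (v x) (v y) ∧
          v (bq l x y) = rh' l (u x) (v y) + lt' l (v x) (u y) + bq' l (v x) (v y)) := by
  refine forall_congr' fun l => ?_
  rw [forall_prod_eq_iff_of_biadditive
    (fun p p' q => by rw [unifiedBracket_add_left hbr hΩ, map_add])
    (fun p q q' => by rw [unifiedBracket_add_right hbr hΩ, map_add])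
    (fun p p' q => by rw [map_add, unifiedBracket_add_left hbr hΩ'])
    (fun p q q' => by rw [map_add, unifiedBracket_add_right hbr hΩ'])]
  have map_inl (a : R) : triangularMap u v (a, 0) = (a, 0) := by simp [triangularMap_apply]
  have map_inr (x : Q) : triangularMap u v (0, x) = (u x, v x) := by simp [triangularMap_apply]
  have block_RR (a b : R) :
      triangularMap u v (unifiedBracket br lh rh lt rt fm bq l (a, 0) (b, 0)) =
        unifiedBracket br lh' rh' lt' rt' fm' bq' l (triangularMap u v (a, 0))
          (triangularMap u v (b, 0)) := by
    simp only [map_inl, unifiedBracket_inl_left hΩ, unifiedBracket_inl_left hΩ',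
      hΩ.lh_bilin.zero_right_s6, hΩ.rh_bilin.zero_right_s6, hΩ'.lh_bilin.zero_right_s6,
      hΩ'.rh_bilin.zero_right_s6, add_zero]
  rw [and_iff_right block_RR]
  simp only [map_inl, map_inr, unifiedBracket_inl_left hΩ, unifiedBracket_inl_left hΩ',
    unifiedBracket_inl_right hΩ, unifiedBracket_inl_right hΩ', unifiedBracket_inr_inr hbr hΩ,
    hbr.zero_left_s6, hbr.zero_right_s6, zero_add, triangularMap_apply]
  simp only [unifiedBracket, Prod.mk.injEq]

theorem datumEquivVia_iff (hbr : IsConformalBilin DR DR DR br)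
    (hΩ : IsExtendingDatum DR DQ lh rh lt rt fm bq)
    (hΩ' : IsExtendingDatum DR DQ lh' rh' lt' rt' fm' bq') {u : Q →ₗ[ℂ] R} {v : Q ≃ₗ[ℂ] Q} :
    DatumEquivVia DR DQ br lh rh lt rt fm bq lh' rh' lt' rt' fm' bq' u v ↔
      PreservesD (LinearMap.prodMap DR DQ) (triangularMap u v) ∧
        IsBracketHom (unifiedBracket br lh rh lt rt fm bq)
          (unifiedBracket br lh' rh' lt' rt' fm' bq') (triangularMap u v) := by
  rw [preservesD_triangularMap_iff, isBracketHom_triangularMap_iff hbr hΩ hΩ']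
  simp only [DatumEquivVia, ← map_add, LinearEquiv.eq_symm_apply, eq_sub_iff_add_eq,
    LinearEquiv.coe_coe, forall_and]
  tauto

theorem bijective_and_stabilizesFst_iff {φ : R × Q →ₗ[ℂ] R × Q} :
    Function.Bijective φ ∧ StabilizesFst φ ↔
      ∃ (u : Q →ₗ[ℂ] R) (v : Q ≃ₗ[ℂ] Q), triangularMap u v = φ := by
  rw [StabilizesFst, ← exists_triangularMap_eq_iff]
  constructor
  · rintro ⟨hbij, u, v, rfl⟩
    exact ⟨u, LinearEquiv.ofBijective v (triangularMap_bijective_iff.1 hbij), rfl⟩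
  · rintro ⟨u, v, rfl⟩
    exact ⟨triangularMap_bijective_iff.2 v.bijective, u, v, rfl⟩

theorem stabilizesFst_and_coStabilizesSnd_iff {φ : R × Q →ₗ[ℂ] R × Q} :
    StabilizesFst φ ∧ CoStabilizesSnd φ ↔
      ∃ u : Q →ₗ[ℂ] R, triangularMap u LinearMap.id = φ := by
  rw [StabilizesFst, ← exists_triangularMap_eq_iff]
  constructor
  · rintro ⟨⟨u, v, rfl⟩, hv⟩
    obtain rfl : v = LinearMap.id := by
      ext x
      simpa only [triangularMap_apply, LinearMap.id_apply] using hv (0, x)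
    exact ⟨u, rfl⟩
  · rintro ⟨u, rfl⟩
    exact ⟨⟨u, _, rfl⟩, fun p => by rw [triangularMap_apply, LinearMap.id_apply]⟩

theorem unified_products_iso_iff_datum_equiv_general (hbr : IsConformalBilin DR DR DR br)
    (hΩ : IsExtendingDatum DR DQ lh rh lt rt fm bq)
    (hΩ' : IsExtendingDatum DR DQ lh' rh' lt' rt' fm' bq') :
    ((∃ φ : R × Q →ₗ[ℂ] R × Q, Function.Bijective φ ∧
        PreservesD (LinearMap.prodMap DR DQ) φ ∧
        IsBracketHom (unifiedBracket br lh rh lt rt fm bq)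
          (unifiedBracket br lh' rh' lt' rt' fm' bq') φ ∧
        StabilizesFst φ) ↔
      (∃ (u : Q →ₗ[ℂ] R) (v : Q ≃ₗ[ℂ] Q),
        DatumEquivVia DR DQ br lh rh lt rt fm bq lh' rh' lt' rt' fm' bq' u v)) ∧
    ((∃ φ : R × Q →ₗ[ℂ] R × Q, Function.Bijective φ ∧
        PreservesD (LinearMap.prodMap DR DQ) φ ∧
        IsBracketHom (unifiedBracket br lh rh lt rt fm bq)
          (unifiedBracket br lh' rh' lt' rt' fm' bq') φ ∧
        StabilizesFst φ ∧ CoStabilizesSnd φ) ↔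
      (∃ u : Q →ₗ[ℂ] R,
        DatumEquivVia DR DQ br lh rh lt rt fm bq lh' rh' lt' rt' fm' bq' u
          (LinearEquiv.refl ℂ Q))) := by
  simp only [datumEquivVia_iff hbr hΩ hΩ', LinearEquiv.refl_toLinearMap]
  refine ⟨⟨?_, ?_⟩, ⟨?_, ?_⟩⟩
  · rintro ⟨φ, hbij, hD, hbracket, hstab⟩
    obtain ⟨u, v, rfl⟩ := bijective_and_stabilizesFst_iff.1 ⟨hbij, hstab⟩
    exact ⟨u, v, hD, hbracket⟩
  · rintro ⟨u, v, hD, hbracket⟩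
    obtain ⟨hbij, hstab⟩ := bijective_and_stabilizesFst_iff.2 ⟨u, v, rfl⟩
    exact ⟨_, hbij, hD, hbracket, hstab⟩
  · rintro ⟨φ, -, hD, hbracket, hstab⟩
    obtain ⟨u, rfl⟩ := stabilizesFst_and_coStabilizesSnd_iff.1 hstab
    exact ⟨u, hD, hbracket⟩
  · rintro ⟨u, hD, hbracket⟩
    have hbij := triangularMap_bijective_iff (u := u).2 (LinearEquiv.refl ℂ Q).bijective
    exact ⟨_, hbij, hD, hbracket, stabilizesFst_and_coStabilizesSnd_iff.2 ⟨u, rfl⟩⟩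

end UnifiedProduct

/-- Two unified products `R ♮ Q` and `R ♮' Q` are isomorphic by an
isomorphism stabilizing `R` iff `Ω(R,Q) ≡ Ω'(R,Q)`, and by an isomorphism stabilizing `R`
and co-stabilizing `Q` iff `Ω(R,Q) ≈ Ω'(R,Q)`. -/
theorem unified_products_iso_iff_datum_equiv
    {R Q : Type*} [AddCommGroup R] [Module ℂ R] [AddCommGroup Q] [Module ℂ Q]
    (DR : Module.End ℂ R) (DQ : Module.End ℂ Q)
    (br : ℂ → R → R → R) (hLeib : IsLeibnizConformal DR br)
    (lh : ℂ → R → Q → R) (rh : ℂ → R → Q → Q)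
    (lt : ℂ → Q → R → Q) (rt : ℂ → Q → R → R)
    (fm : ℂ → Q → Q → R) (bq : ℂ → Q → Q → Q)
    (lh' : ℂ → R → Q → R) (rh' : ℂ → R → Q → Q)
    (lt' : ℂ → Q → R → Q) (rt' : ℂ → Q → R → R)
    (fm' : ℂ → Q → Q → R) (bq' : ℂ → Q → Q → Q)
    (hdatum : IsExtendingDatum DR DQ lh rh lt rt fm bq)
    (hdatum' : IsExtendingDatum DR DQ lh' rh' lt' rt' fm' bq')
    (hU : IsLeibnizConformal (LinearMap.prodMap DR DQ)
      (unifiedBracket br lh rh lt rt fm bq))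
    (hU' : IsLeibnizConformal (LinearMap.prodMap DR DQ)
      (unifiedBracket br lh' rh' lt' rt' fm' bq')) :
    ((∃ φ : R × Q →ₗ[ℂ] R × Q, Function.Bijective φ ∧
        PreservesD (LinearMap.prodMap DR DQ) φ ∧
        IsBracketHom (unifiedBracket br lh rh lt rt fm bq)
          (unifiedBracket br lh' rh' lt' rt' fm' bq') φ ∧
        StabilizesFst φ) ↔
      (∃ (u : Q →ₗ[ℂ] R) (v : Q ≃ₗ[ℂ] Q),
        DatumEquivVia DR DQ br lh rh lt rt fm bq lh' rh' lt' rt' fm' bq' u v)) ∧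
    ((∃ φ : R × Q →ₗ[ℂ] R × Q, Function.Bijective φ ∧
        PreservesD (LinearMap.prodMap DR DQ) φ ∧
        IsBracketHom (unifiedBracket br lh rh lt rt fm bq)
          (unifiedBracket br lh' rh' lt' rt' fm' bq') φ ∧
        StabilizesFst φ ∧ CoStabilizesSnd φ) ↔
      (∃ u : Q →ₗ[ℂ] R,
        DatumEquivVia DR DQ br lh rh lt rt fm bq lh' rh' lt' rt' fm' bq' u
          (LinearEquiv.refl ℂ Q))) :=
  unified_products_iso_iff_datum_equiv_general hLeib.bilin hdatum hdatum'
end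
end
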